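/- Let Q be a commutative Moufang loop and let α : Q → Q be any map. Then α is a J-central orthoautomorphism of Q if and only if the map id-α : x ↦ x-α(x) is a J-central orthoautomorphism of Q. -/

import Mathlib

/-- A loop: a quasigroup with a two-sided neutral element. -/
structure Loop (Q : Type) where
  add : Q → Q → Q
  zero : Q
  addLeftBij : ∀ x, Function.Bijective fun y => add x y
  addRightBij : ∀ x, Function.Bijective fun y => add y x
  zero_add : ∀ x, add zero x = x
  add_zero : ∀ x, add x zero = x

namespace Loop

/-- The center of a loop: elements commuting and associating with everything. -/
def center {Q : Type} (L : Loop Q) : Set Q :=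
  {z | (∀ x, L.add z x = L.add x z) ∧
       (∀ x y, L.add z (L.add x y) = L.add (L.add z x) y) ∧
       (∀ x y, L.add x (L.add z y) = L.add (L.add x z) y) ∧
       (∀ x y, L.add x (L.add y z) = L.add (L.add x y) z)}

/-- A map `α` is central if `Z(Q) + α(x) = Z(Q) + x` for every `x`. -/
def IsCentral {Q : Type} (L : Loop Q) (α : Q → Q) : Prop :=
  ∀ x, (fun z => L.add z (α x)) '' L.center = (fun z => L.add z x) '' L.center

/-- Automorphism of a loop: a bijective map respecting the operation. -/
def IsAut {Q : Type} (L : Loop Q) (f : Q → Q) : Prop :=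
  Function.Bijective f ∧ ∀ x y, f (L.add x y) = L.add (f x) (f y)

/-- `neg` provides two-sided inverses for the loop. -/
def IsTwoSidedInv {Q : Type} (L : Loop Q) (neg : Q → Q) : Prop :=
  ∀ x, L.add x (neg x) = L.zero ∧ L.add (neg x) x = L.zero

/-- Commutative Moufang loop: commutative and satisfying the Moufang identity. -/
def IsCommMoufang {Q : Type} (L : Loop Q) : Prop :=
  (∀ x y, L.add x y = L.add y x) ∧
  (∀ x y z, L.add x (L.add y (L.add x z)) = L.add (L.add (L.add x y) x) z)

end Loop

open Loop in
/-- `α` is a J-central orthoautomorphism: a bijective endomorphism with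
`x + α(x)` central and `id - α` bijective. -/
def IsJCentralOrthoAut {Q : Type} (L : Loop Q) (neg : Q → Q) (α : Q → Q) : Prop :=
  Function.Bijective α ∧ (∀ x y, α (L.add x y) = L.add (α x) (α y)) ∧
  (∀ x, L.add x (α x) ∈ L.center) ∧
  Function.Bijective (fun x => L.add x (neg (α x)))

/-!
Write `Z` for the center. If `c = x + α x` lies in `Z`, then `x - α x = -c + 2x`, so `id - α` is the
doubling map up to a central term. Doubling is additive in a commutative Moufang loop, and
`x + (x - α x) = -c + 3x` is central because every `3x` is. Hence `id - α` inherits additivity and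
J-centrality from `α`. As `id - (id - α) = α`, the two bijectivity conditions are exchanged and one
implication gives the other.
-/

theorem mem_addCenter_of_left_assoc {M : Type*} [AddCommMagma M] {z : M}
    (hz : ∀ x y, z + (x + y) = z + x + y) : z ∈ Set.addCenter M where
  comm x := add_comm z x
  left_assoc := hz
  right_assoc x y := by rw [add_comm, add_comm x y, hz, add_comm x, add_comm z]

/-- A commutative Moufang loop in additive notation. Divisibility is not a field: solutions of
`a + x = b` exist because of the negatives and are unique by cancellation. -/
class CommMoufangLoop (Q : Type*) extends
    AddZeroClass Q, AddCommMagma Q, Neg Q, IsLeftCancelAdd Q where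
  neg_add_cancel (x : Q) : -x + x = 0
  moufang (x y z : Q) : x + (y + (x + z)) = x + y + x + z

namespace CommMoufangLoop

variable {Q : Type*} [CommMoufangLoop Q]

theorem add_neg_cancel (x : Q) : x + -x = 0 := by rw [add_comm, neg_add_cancel]

instance : InvolutiveNeg Q where
  neg_neg x := add_left_cancel (a := -x) (by rw [add_neg_cancel, neg_add_cancel])

theorem neg_add_cancel_left (x y : Q) : -x + (x + y) = y :=
  add_left_cancel (a := x) (by rw [moufang, add_neg_cancel, zero_add])

theorem add_neg_cancel_left (x y : Q) : x + (-x + y) = y := by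
  simpa only [neg_neg] using neg_add_cancel_left (-x) y

theorem add_self_add (x y : Q) : x + x + y = x + (x + y) := by
  simpa only [zero_add, add_zero] using (moufang x 0 y).symm

theorem neg_add (x y : Q) : -(x + y) = -x + -y := by
  have add_neg_add : y + -(x + y) = -x := by
    simpa only [add_comm (x + y), neg_add_cancel_left, add_comm y] using
      neg_add_cancel_left (x + y) (-x)
  rw [← add_neg_add, add_comm _ (-y), neg_add_cancel_left]

theorem add_neg_add_neg (x y : Q) : x + -(x + -y) = y := by
  rw [neg_add, neg_neg, add_neg_cancel_left]

theorem add_add_eq_add_add_add_neg_add (x y z : Q) :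
    x + (y + z) = x + (x + y) + (-x + z) := by
  simpa only [add_neg_cancel_left, add_comm (x + y) x] using moufang x y (-x + z)

theorem add_add_add_self_left (x y z : Q) : x + y + (x + z) = x + x + (y + z) :=
  calc
    x + y + (x + z) = x + (x + (-x + y)) + (-x + (x + (x + z))) := by
      rw [neg_add_cancel_left, add_neg_cancel_left]
    _ = x + (-x + y + (x + (x + z))) := (add_add_eq_add_add_add_neg_add ..).symm
    _ = x + (x + (z + y)) := by
      rw [add_comm (-x + y), add_add_eq_add_add_add_neg_add x z]
    _ = x + x + (y + z) := by rw [add_self_add, add_comm z]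

theorem add_add_self_mem_addCenter (x : Q) : x + (x + x) ∈ Set.addCenter Q := by
  have triple_add (y : Q) : x + (x + x) + y = x + (x + (x + y)) := by
    rw [moufang, add_comm x (x + x)]
  refine mem_addCenter_of_left_assoc fun y z ↦ ?_
  calc
    x + (x + x) + (y + z) = x + (x + y + (x + z)) := by
      rw [triple_add, ← add_self_add x (y + z), add_add_add_self_left]
    _ = x + (x + (x + y)) + z := by
      rw [add_add_eq_add_add_add_neg_add, neg_add_cancel_left]
    _ = x + (x + x) + y + z := by rw [triple_add]

theorem neg_mem_addCenter {z : Q} (hz : z ∈ Set.addCenter Q) : -z ∈ Set.addCenter Q :=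
  mem_addCenter_of_left_assoc fun x y ↦ add_left_cancel (a := z) (by
    rw [add_neg_cancel_left, hz.left_assoc, add_neg_cancel_left])

theorem add_add_add_comm_of_mem_addCenter {c d : Q} (hc : c ∈ Set.addCenter Q)
    (hd : d ∈ Set.addCenter Q) (x y : Q) : c + x + (d + y) = c + d + (x + y) := by
  rw [← hc.left_assoc, ← hd.left_comm, hc.left_assoc]

theorem add_neg_eq_neg_add_add_add_self (x a : Q) : x + -a = -(x + a) + (x + x) := by
  rw [add_comm _ (x + x), add_self_add, neg_add, add_neg_cancel_left]

theorem add_add_add_comm_of_add_mem_addCenter {x y a b : Q} (hxa : x + a ∈ Set.addCenter Q)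
    (hyb : y + b ∈ Set.addCenter Q) : x + y + (a + b) = x + a + (y + b) := by
  have eq_add_neg (u v : Q) : v = u + v + -u := by
    rw [add_comm, neg_add_cancel_left]
  have add_eq : a + b = x + a + (y + b) + -(x + y) := by
    rw [neg_add, ← add_add_add_comm_of_mem_addCenter hxa hyb, ← eq_add_neg, ← eq_add_neg]
  rw [add_eq, add_comm _ (-(x + y)), add_neg_cancel_left]

theorem add_add_neg_add_of_add_mem_addCenter {x y a b : Q} (hxa : x + a ∈ Set.addCenter Q)
    (hyb : y + b ∈ Set.addCenter Q) : x + y + -(a + b) = x + -a + (y + -b) :=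
  calc
    x + y + -(a + b) = -(x + y + (a + b)) + (x + y + (x + y)) :=
      add_neg_eq_neg_add_add_add_self ..
    _ = -(x + a) + -(y + b) + (x + x + (y + y)) := by
      rw [add_add_add_comm_of_add_mem_addCenter hxa hyb, neg_add, add_add_add_self_left]
    _ = -(x + a) + (x + x) + (-(y + b) + (y + y)) :=
      (add_add_add_comm_of_mem_addCenter (neg_mem_addCenter hxa) (neg_mem_addCenter hyb) ..).symm
    _ = x + -a + (y + -b) := by simp only [← add_neg_eq_neg_add_add_add_self]

theorem add_add_neg_mem_addCenter {x a : Q} (hxa : x + a ∈ Set.addCenter Q) :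
    x + (x + -a) ∈ Set.addCenter Q := by
  have hneg := neg_mem_addCenter hxa
  rw [add_neg_eq_neg_add_add_add_self, ← hneg.left_comm]
  exact Set.add_mem_addCenter hneg (add_add_self_mem_addCenter x)

end CommMoufangLoop

namespace Loop.IsCommMoufang

variable {Q : Type} {L : Loop Q} {neg : Q → Q}

/-- The additive notation on `Q` in which `L.add`, `L.zero` and `neg` become `+`, `0` and `-`. -/
abbrev toCommMoufangLoop (h : L.IsCommMoufang) (hneg : L.IsTwoSidedInv neg) :
    CommMoufangLoop Q where
  add := L.add
  zero := L.zero
  neg := neg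
  zero_add := L.zero_add
  add_zero := L.add_zero
  add_comm := h.1
  add_left_cancel x _ _ hxy := (L.addLeftBij x).injective hxy
  neg_add_cancel x := (hneg x).2
  moufang := h.2

theorem addCenter_toCommMoufangLoop (h : L.IsCommMoufang) (hneg : L.IsTwoSidedInv neg) :
    letI := h.toCommMoufangLoop hneg
    Set.addCenter Q = L.center :=
  letI := h.toCommMoufangLoop hneg
  Set.ext fun _ ↦
    ⟨fun hz ↦ ⟨hz.comm, hz.left_assoc, fun x y ↦ (hz.mid_assoc x y).symm,
        fun x y ↦ (hz.right_assoc x y).symm⟩,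
      fun hz ↦ mem_addCenter_of_left_assoc hz.2.1⟩

theorem id_sub_id_sub (h : L.IsCommMoufang) (hneg : L.IsTwoSidedInv neg) (α : Q → Q) :
    (fun x ↦ L.add x (neg (L.add x (neg (α x))))) = α :=
  letI := h.toCommMoufangLoop hneg
  funext fun x ↦ CommMoufangLoop.add_neg_add_neg x (α x)

end Loop.IsCommMoufang

theorem IsJCentralOrthoAut.id_sub {Q : Type} {L : Loop Q} {neg α : Q → Q}
    (hα : IsJCentralOrthoAut L neg α) (h : L.IsCommMoufang) (hneg : L.IsTwoSidedInv neg) :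
    IsJCentralOrthoAut L neg (fun x ↦ L.add x (neg (α x))) := by
  let := h.toCommMoufangLoop hneg
  obtain ⟨bijective, map_add, add_mem, bijective_id_sub⟩ := hα
  rw [← h.addCenter_toCommMoufangLoop hneg] at add_mem
  refine ⟨bijective_id_sub, fun x y ↦ ?_, fun x ↦ ?_, ?_⟩
  · beta_reduce
    rw [map_add]
    exact CommMoufangLoop.add_add_neg_add_of_add_mem_addCenter (add_mem x) (add_mem y)
  · rw [← h.addCenter_toCommMoufangLoop hneg]
    exact CommMoufangLoop.add_add_neg_mem_addCenter (add_mem x)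
  · rwa [h.id_sub_id_sub hneg]

open Loop in
/-- In a commutative Moufang loop, `α` is a J-central orthoautomorphism iff
`id - α` is. -/
theorem stmt {Q : Type} (L : Loop Q) (h : L.IsCommMoufang)
    (neg : Q → Q) (hneg : L.IsTwoSidedInv neg) (α : Q → Q) :
    IsJCentralOrthoAut L neg α ↔
      IsJCentralOrthoAut L neg (fun x => L.add x (neg (α x))) := by
  refine ⟨fun hα ↦ hα.id_sub h hneg, fun hsub ↦ ?_⟩
  simpa only [h.id_sub_id_sub hneg] using hsub.id_sub h hneg
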